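/- arXiv:1703.05173 — 2 statements merged into one kernel-verified Lean document; each statement's English description precedes it below -/
import Mathlib

section
/- Let k ≥ 3, let H be a simple k-uniform hypergraph on a vertex set V of size n with maximum degree Δ, let ε = 1/(50k²), and suppose q ≥ 500·k³·Δ^{1/(k−1)}. Then the set 𝒬 of proper q-colorings is nonempty, and for every vertex v ∈ V, |{X ∈ 𝒬 : X is ε-bad at v}| / |𝒬| ≤ (|{X ∈ [q]^V : X is ε-bad at v}| / q^n) · (1 − 2/q^{k−1})^{−|N_v|}, where N_v = {f ∈ E : f ∩ e ≠ ∅ for some edge e of H containing v}. -/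
/-! Haeupler, Saha and Srinivasan's transfer principle for the Lovász Local Lemma.  Let
`x = 2/q^{k-1}`, twice the probability that an edge is monochromatic.  The heart of the matter is
`card_mono_le`: for every `S ⊆ E` and `f ∈ E`, among the colorings proper on `S` at most a fraction
`x` has `f` monochromatic.  It follows by induction on `|S|`: discarding the edges of `S` that
meet `f` makes the event that `f` is monochromatic independent of the remaining constraints
(`card_mul_of_depends`), while restoring those at most `kΔ` edges one at a time costs a factor
`1 - x` each by induction (`card_proper_union_ge`), and `(1 - x)^{kΔ} ≥ 1/2` by Bernoulli.

Badness at `v` depends only on the colors in the edges through `v`, hence is independent of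
properness on `E \ N_v`; restoring the edges of `N_v` costs the factor `(1 - x)^{|N_v|}`. -/

open Finset

noncomputable section
open Classical

variable {V : Type} [Fintype V] [DecidableEq V]

/-- The set of proper `q`-colorings: no edge is monochromatic. -/
def properColorings (E : Finset (Finset V)) (q : ℕ) : Finset (V → Fin q) :=
  Finset.univ.filter (fun X => ∀ e ∈ E, ∃ u ∈ e, ∃ w ∈ e, X u ≠ X w)

/-- `yCount E X v i` is the number of edges `e ∋ v` on which `X` takes exactly `i`
distinct values on `e \ {v}`. -/
def yCount (E : Finset (Finset V)) {q : ℕ} (X : V → Fin q) (v : V) (i : ℕ) : ℕ :=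
  (E.filter (fun e => v ∈ e ∧ ((e.erase v).image X).card = i)).card

/-- `X` is `ε`-bad at `v` if `y_{v,i,X} ≥ (εq)^i` for some `1 ≤ i ≤ k-2`. -/
def epsBadAt (E : Finset (Finset V)) (k : ℕ) {q : ℕ} (ε : ℝ) (X : V → Fin q) (v : V) : Prop :=
  ∃ i : ℕ, 1 ≤ i ∧ i ≤ k - 2 ∧ (ε * (q : ℝ)) ^ i ≤ (yCount E X v i : ℝ)

/-- The set `A(v,X)` of colors available at `v`: those `c` such that no edge `e ∋ v`
has `e \ {v}` entirely colored `c`. -/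
def availSet (E : Finset (Finset V)) {q : ℕ} (X : V → Fin q) (v : V) : Finset (Fin q) :=
  Finset.univ.filter (fun c => ¬ ∃ e ∈ E, v ∈ e ∧ ∀ w ∈ e.erase v, X w = c)

/-- One-step transition probability of the Glauber dynamics: choose `v` uniformly from `V`;
if `A(v,X)` is nonempty recolor `v` with a uniform color from `A(v,X)`, else stay put. -/
def stepProb (E : Finset (Finset V)) {q : ℕ} (X Z : V → Fin q) : ℝ :=
  (Fintype.card V : ℝ)⁻¹ * ∑ v : V,
    if (availSet E X v).Nonempty then
      (if (∀ u : V, u ≠ v → Z u = X u) ∧ Z v ∈ availSet E X v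
        then ((availSet E X v).card : ℝ)⁻¹ else 0)
    else (if Z = X then 1 else 0)

/-- The distribution of the Glauber dynamics after `t` steps, started from
the initial distribution `init`. -/
def glauberDist (E : Finset (Finset V)) {q : ℕ} (init : (V → Fin q) → ℝ) :
    ℕ → (V → Fin q) → ℝ
  | 0 => init
  | t + 1 => fun Z => ∑ X : V → Fin q, glauberDist E init t X * stepProb E X Z

/-- `goodRunDist E k ε X₀ t Z` is the probability that the Glauber dynamics started at `X₀`
satisfies: `X_s` is `ε`-good for all `0 ≤ s ≤ t` and `X_t = Z`. -/
def goodRunDist (E : Finset (Finset V)) (k : ℕ) {q : ℕ} (ε : ℝ) (X₀ : V → Fin q) :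
    ℕ → (V → Fin q) → ℝ
  | 0 => fun X => if X = X₀ ∧ (∀ v : V, ¬ epsBadAt E k ε X v) then 1 else 0
  | t + 1 => fun Z =>
      if (∀ v : V, ¬ epsBadAt E k ε Z v)
        then ∑ X : V → Fin q, goodRunDist E k ε X₀ t X * stepProb E X Z
        else 0

/-! ### Independence -/

/-- Independence: events determined by the colors on `A` and by the colors off `A`
are independent under the uniform distribution on colorings. -/
lemma card_mul_of_depends {q : ℕ} (A : Finset V) (P Q : (V → Fin q) → Prop)
    (hP : ∀ X Y : V → Fin q, (∀ u ∈ A, X u = Y u) → P X → P Y)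
    (hQ : ∀ X Y : V → Fin q, (∀ u ∉ A, X u = Y u) → Q X → Q Y) :
    (univ.filter (fun X => P X ∧ Q X)).card * q ^ Fintype.card V =
      (univ.filter P).card * (univ.filter Q).card := by
  have hc : q ^ Fintype.card V = (univ : Finset (V → Fin q)).card := by simp
  rw [hc, ← card_product, ← card_product]
  -- Swapping the colors off `A` is an involution on pairs of colorings.
  let sw : (V → Fin q) × (V → Fin q) → (V → Fin q) × (V → Fin q) := fun p =>
    (fun u => if u ∈ A then p.1 u else p.2 u, fun u => if u ∈ A then p.2 u else p.1 u)
  have hsw : ∀ p, sw (sw p) = p := by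
    rintro ⟨X, Y⟩
    ext u <;> by_cases hu : u ∈ A <;> simp [sw, hu]
  refine Finset.card_bij' (fun p _ => sw p) (fun p _ => sw p) ?_ ?_
    (fun p _ => hsw p) (fun p _ => hsw p)
  · rintro ⟨X, Y⟩ h
    simp only [mem_product, mem_filter, mem_univ, true_and, and_true] at h ⊢
    exact ⟨hP X _ (fun u hu => by simp [sw, hu]) h.1,
      hQ X _ (fun u hu => by simp [sw, hu]) h.2⟩
  · rintro ⟨X, Y⟩ h
    simp only [mem_product, mem_filter, mem_univ, true_and, and_true] at h ⊢
    exact ⟨hP X _ (fun u hu => by simp [sw, hu]) h.1,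
      hQ Y _ (fun u hu => by simp [sw, hu]) h.2⟩

/-- The edge `f` is monochromatic under `X`. -/
def IsMono {q : ℕ} (f : Finset V) (X : V → Fin q) : Prop :=
  ∀ u ∈ f, ∀ w ∈ f, X u = X w

lemma mem_properColorings {q : ℕ} (S : Finset (Finset V)) (X : V → Fin q) :
    X ∈ properColorings S q ↔ ∀ e ∈ S, ¬ IsMono e X := by
  simp [properColorings, IsMono]

lemma properColorings_anti {q : ℕ} {S T : Finset (Finset V)} (h : S ⊆ T) :
    properColorings T q ⊆ properColorings S q := fun X hX => by
  rw [mem_properColorings] at hX ⊢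
  exact fun e he => hX e (h he)

lemma isMono_congr {q : ℕ} {f : Finset V} {X Y : V → Fin q} (h : ∀ u ∈ f, X u = Y u)
    (hX : IsMono f X) : IsMono f Y := fun u hu w hw => by
  rw [← h u hu, ← h w hw]; exact hX u hu w hw

/-- An event `P` determined by the colors on `A` is independent of properness on a set of edges
that are all disjoint from `A`. -/
lemma card_filter_proper_mul {q : ℕ} (A : Finset V) (P : (V → Fin q) → Prop)
    (hP : ∀ X Y : V → Fin q, (∀ u ∈ A, X u = Y u) → P X → P Y)
    (S : Finset (Finset V)) (hS : ∀ e ∈ S, Disjoint A e) :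
    ((properColorings S q).filter P).card * q ^ Fintype.card V =
      (univ.filter P).card * (properColorings S q).card := by
  have h := card_mul_of_depends A P (fun X => X ∈ properColorings S q) hP (by
    intro X Y hXY hX
    rw [mem_properColorings] at hX ⊢
    intro e he hm
    refine hX e he (isMono_congr (fun u hu => (hXY u ?_).symm) hm)
    exact fun hA => (Finset.disjoint_left.mp (hS e he)) hA hu)
  convert h using 3
  · ext X; simp [and_comm]
  · ext X; simp

/-! ### The conditional estimate of the Local Lemma -/

/-- A `k`-element edge is monochromatic with probability at most `q^{-(k-1)}`. -/
lemma card_isMono_mul_le {q k : ℕ} (hk : 1 ≤ k) (f : Finset V) (hf : f.card = k) :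
    (univ.filter (fun X : V → Fin q => IsMono f X)).card * q ^ (k - 1) ≤
      q ^ Fintype.card V := by
  let F : Fin q → Finset (V → Fin q) := fun c =>
    Fintype.piFinset (fun u => if u ∈ f then {c} else univ)
  have hF : ∀ c, (F c).card = q ^ (Fintype.card V - k) := by
    intro c
    have : ∀ u, (if u ∈ f then ({c} : Finset (Fin q)) else univ).card =
        if u ∈ f then 1 else q := by
      intro u; split_ifs <;> simp
    simp only [F, Fintype.card_piFinset, this]
    rw [Finset.prod_ite]
    simp [Finset.filter_not, Finset.card_sdiff, hf]
  have hsub : univ.filter (fun X : V → Fin q => IsMono f X) ⊆ univ.biUnion F := by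
    intro X hX
    rw [mem_filter] at hX
    obtain ⟨u, hu⟩ : f.Nonempty := Finset.card_pos.mp (by omega)
    rw [mem_biUnion]
    refine ⟨X u, mem_univ _, ?_⟩
    rw [Fintype.mem_piFinset]
    intro w
    by_cases hw : w ∈ f
    · simpa [hw] using hX.2 w hw u hu
    · simp [hw]
  have hle : (univ.filter (fun X : V → Fin q => IsMono f X)).card ≤
      q * q ^ (Fintype.card V - k) := by
    refine (card_le_card hsub).trans (card_biUnion_le.trans ?_)
    simp [hF]
  have hkn : k ≤ Fintype.card V := hf ▸ Finset.card_le_univ f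
  calc _ ≤ q * q ^ (Fintype.card V - k) * q ^ (k - 1) := Nat.mul_le_mul_right _ hle
    _ = q ^ (1 + (Fintype.card V - k) + (k - 1)) := by rw [pow_add, pow_add, pow_one]
    _ = q ^ Fintype.card V := by congr 1; omega

lemma card_proper_insert {q : ℕ} (f : Finset V) (S : Finset (Finset V)) :
    ((properColorings (insert f S) q).card : ℝ) =
      (properColorings S q).card - ((properColorings S q).filter (IsMono f)).card := by
  have h : properColorings (insert f S) q =
      (properColorings S q).filter (fun X => ¬ IsMono f X) := by
    ext X
    simp only [mem_filter, mem_properColorings, Finset.forall_mem_insert]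
    tauto
  have h2 := Finset.card_filter_add_card_filter_not (s := properColorings S q) (IsMono f)
  rw [h, ← h2]
  push_cast
  ring

/-- If, conditionally on properness on any part of `T ∪ D`, each further edge of `D` is
monochromatic with probability at most `x`, then imposing properness on `D` keeps at least a
fraction `(1 - x)^{|D|}` of the colorings proper on `T`. -/
lemma card_proper_union_ge {q : ℕ} {x : ℝ} (hx0 : 0 ≤ x) (hx1 : x ≤ 1) (T D : Finset (Finset V))
    (h : ∀ d ∈ D, ∀ U ⊆ T ∪ D, d ∉ U →
      (((properColorings U q).filter (IsMono d)).card : ℝ) ≤ x * (properColorings U q).card) :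
    (1 - x) ^ D.card * ((properColorings T q).card : ℝ) ≤ (properColorings (T ∪ D) q).card := by
  induction D using Finset.induction_on with
  | empty => simp
  | insert d D hd ih =>
    have ih' := ih (fun d' hd' U hU => h d' (mem_insert_of_mem hd') U
      (hU.trans (union_subset_union_right (subset_insert _ _))))
    have hstep : (1 - x) * ((properColorings (T ∪ D) q).card : ℝ) ≤
        (properColorings (T ∪ insert d D) q).card := by
      rw [union_insert]
      by_cases hdT : d ∈ T ∪ D
      · rw [insert_eq_of_mem hdT]
        have : (0 : ℝ) ≤ (properColorings (T ∪ D) q).card := Nat.cast_nonneg _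
        nlinarith
      · have := h d (mem_insert_self _ _) (T ∪ D)
          (union_subset_union_right (subset_insert _ _)) hdT
        rw [card_proper_insert]
        linarith
    rw [card_insert_of_notMem hd, pow_succ]
    calc _ = (1 - x) * ((1 - x) ^ D.card * ((properColorings T q).card : ℝ)) := by ring
      _ ≤ (1 - x) * ((properColorings (T ∪ D) q).card : ℝ) :=
        mul_le_mul_of_nonneg_left ih' (by linarith)
      _ ≤ _ := hstep

lemma card_filter_meets_le {k Δ : ℕ} {E S : Finset (Finset V)} (hSE : S ⊆ E)
    (hdeg : ∀ u : V, (E.filter (fun e => u ∈ e)).card ≤ Δ) (f : Finset V) (hf : f.card = k) :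
    (S.filter (fun e => ¬ Disjoint f e)).card ≤ k * Δ := by
  have hsub : S.filter (fun e => ¬ Disjoint f e) ⊆
      f.biUnion (fun u => E.filter (fun e => u ∈ e)) := by
    intro e he
    rw [mem_filter, Finset.not_disjoint_iff] at he
    obtain ⟨heS, u, huf, hue⟩ := he
    exact mem_biUnion.mpr ⟨u, huf, mem_filter.mpr ⟨hSE heS, hue⟩⟩
  rw [← hf]
  exact (card_le_card hsub).trans (card_biUnion_le_card_mul _ _ _ (fun u _ => hdeg u))

/-- The conditional estimate of the Lovász Local Lemma: given properness on any `S ⊆ E`, an edge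
is monochromatic with probability at most `2/q^{k-1}`. -/
lemma card_mono_le {k Δ q : ℕ} (hk : 1 ≤ k) (hΔ : 1 ≤ Δ) (E : Finset (Finset V))
    (hunif : ∀ e ∈ E, e.card = k)
    (hdeg : ∀ u : V, (E.filter (fun e => u ∈ e)).card ≤ Δ)
    (hq : 4 * (k : ℝ) * Δ ≤ (q : ℝ) ^ (k - 1)) :
    ∀ S ⊆ E, ∀ f ∈ E, (((properColorings S q).filter (IsMono f)).card : ℝ) ≤
      2 / (q : ℝ) ^ (k - 1) * (properColorings S q).card := by
  have hkΔ : (1 : ℝ) ≤ (k : ℝ) * Δ := by exact_mod_cast Nat.mul_pos hk hΔ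
  have hR : 0 < (q : ℝ) ^ (k - 1) := by linarith
  have hx0 : 0 ≤ 2 / (q : ℝ) ^ (k - 1) := by positivity
  have hx : (k : ℝ) * Δ * (2 / (q : ℝ) ^ (k - 1)) ≤ 1 / 2 := by
    rw [mul_div_assoc', div_le_iff₀ hR]; linarith
  have hx1 : 2 / (q : ℝ) ^ (k - 1) ≤ 1 / 2 := by nlinarith
  have hxR : 2 / (q : ℝ) ^ (k - 1) * (q : ℝ) ^ (k - 1) = 2 := by field_simp
  set x := 2 / (q : ℝ) ^ (k - 1) with hxdef
  intro S
  induction S using Finset.strongInduction with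
  | H S ih =>
  intro hSE f hf
  set T := S.filter (fun e => Disjoint f e) with hT
  set D := S.filter (fun e => ¬ Disjoint f e) with hD
  have hTD : T ∪ D = S := Finset.filter_union_filter_not_eq _ S
  have hchain : (1 - x) ^ D.card * ((properColorings T q).card : ℝ) ≤
      (properColorings S q).card := by
    have := card_proper_union_ge hx0 (by linarith) T D (q := q) (fun d hd U hU hdU => by
      rw [hTD] at hU
      have hdS : d ∈ S := (mem_filter.mp hd).1
      exact ih U (Finset.ssubset_iff_of_subset hU |>.mpr ⟨d, hdS, hdU⟩) (hU.trans hSE) d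
        (hSE hdS))
    rwa [hTD] at this
  have hDcard : (D.card : ℝ) ≤ k * Δ := by
    exact_mod_cast card_filter_meets_le hSE hdeg f (hunif f hf)
  have hbern : 1 / 2 ≤ (1 - x) ^ D.card := by
    have := one_add_mul_le_pow (a := -x) (by linarith) D.card
    rw [← sub_eq_add_neg] at this
    nlinarith
  have hind := card_filter_proper_mul f (IsMono f) (fun _ _ h => isMono_congr h) T (q := q)
    (fun e he => (mem_filter.mp he).2)
  have hmono := card_isMono_mul_le (q := q) hk f (hunif f hf)
  have hn : 0 < (q : ℝ) ^ Fintype.card V := by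
    refine pow_pos ?_ _
    rcases Nat.eq_zero_or_pos q with h0 | h0
    · exfalso
      subst h0
      have : ((0 : ℕ) : ℝ) ^ (k - 1) ≤ 1 := by
        rw [Nat.cast_zero]; exact pow_le_one₀ le_rfl zero_le_one
      linarith
    · exact_mod_cast h0
  have hind' : (((properColorings T q).filter (IsMono f)).card : ℝ) * (q : ℝ) ^ Fintype.card V =
      ((univ.filter (fun X : V → Fin q => IsMono f X)).card : ℝ) *
        (properColorings T q).card := by exact_mod_cast hind
  have hmono' : ((univ.filter (fun X : V → Fin q => IsMono f X)).card : ℝ) *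
      (q : ℝ) ^ (k - 1) ≤ (q : ℝ) ^ Fintype.card V := by exact_mod_cast hmono
  have hsub : (((properColorings S q).filter (IsMono f)).card : ℝ) ≤
      ((properColorings T q).filter (IsMono f)).card := by
    exact_mod_cast card_le_card
      (filter_subset_filter _ (properColorings_anti (filter_subset _ _)))
  have hTnn : (0 : ℝ) ≤ (properColorings T q).card := Nat.cast_nonneg _
  have hMT : (((properColorings T q).filter (IsMono f)).card : ℝ) * (q : ℝ) ^ (k - 1) ≤
      (properColorings T q).card := by
    refine le_of_mul_le_mul_right ?_ hn
    calc _ = (((properColorings T q).filter (IsMono f)).card : ℝ) *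
          (q : ℝ) ^ Fintype.card V * (q : ℝ) ^ (k - 1) := by ring
      _ = ((univ.filter (fun X : V → Fin q => IsMono f X)).card : ℝ) * (q : ℝ) ^ (k - 1) *
          (properColorings T q).card := by rw [hind']; ring
      _ ≤ (q : ℝ) ^ Fintype.card V * (properColorings T q).card :=
        mul_le_mul_of_nonneg_right hmono' hTnn
      _ = _ := by ring
  have hhalf : 1 / 2 * ((properColorings T q).card : ℝ) ≤ (properColorings S q).card :=
    (mul_le_mul_of_nonneg_right hbern hTnn).trans hchain
  refine hsub.trans (le_of_mul_le_mul_right ?_ hR)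
  calc _ ≤ ((properColorings T q).card : ℝ) := hMT
    _ ≤ 2 * (properColorings S q).card := by linarith
    _ = x * (q : ℝ) ^ (k - 1) * (properColorings S q).card := by rw [hxR]
    _ = _ := by ring

/-! ### Transfer to the event of badness at a vertex -/

/-- The numerical hypothesis of the Local Lemma, `4kΔ ≤ q^{k-1}`. -/
lemma four_mul_le_pow {k Δ q : ℕ} (hk : 3 ≤ k)
    (hq : 500 * (k : ℝ) ^ 3 * (Δ : ℝ) ^ ((1 : ℝ) / ((k : ℝ) - 1)) ≤ (q : ℝ)) :
    4 * (k : ℝ) * Δ ≤ (q : ℝ) ^ (k - 1) := by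
  have hk' : (3 : ℝ) ≤ k := by exact_mod_cast hk
  have hroot : ((Δ : ℝ) ^ ((1 : ℝ) / ((k : ℝ) - 1))) ^ (k - 1) = Δ := by
    have : ((k : ℝ) - 1) = ((k - 1 : ℕ) : ℝ) := by rw [Nat.cast_sub (by omega)]; simp
    rw [this, one_div]
    exact Real.rpow_inv_natCast_pow (Nat.cast_nonneg _) (by omega)
  have hk3 : (k : ℝ) ≤ (k : ℝ) ^ 3 := le_self_pow₀ (by linarith) (by norm_num)
  have hbase : 4 * (k : ℝ) ≤ (500 * (k : ℝ) ^ 3) ^ (k - 1) :=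
    (by linarith : 4 * (k : ℝ) ≤ 500 * (k : ℝ) ^ 3).trans
      (le_self_pow₀ (by linarith) (by omega))
  calc 4 * (k : ℝ) * Δ ≤ (500 * (k : ℝ) ^ 3) ^ (k - 1) * Δ :=
        mul_le_mul_of_nonneg_right hbase (Nat.cast_nonneg _)
    _ = (500 * (k : ℝ) ^ 3 * (Δ : ℝ) ^ ((1 : ℝ) / ((k : ℝ) - 1))) ^ (k - 1) := by
        rw [mul_pow (500 * (k : ℝ) ^ 3), hroot]
    _ ≤ (q : ℝ) ^ (k - 1) := pow_le_pow_left₀ (by positivity) hq _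

/-- Badness at `v` is determined by the colors in the edges through `v`. -/
lemma epsBadAt_congr {E : Finset (Finset V)} {k q : ℕ} {ε : ℝ} {v : V} {X Y : V → Fin q}
    (h : ∀ u ∈ (E.filter (fun e => v ∈ e)).biUnion id, X u = Y u)
    (hX : epsBadAt E k ε X v) : epsBadAt E k ε Y v := by
  obtain ⟨i, h1, h2, h3⟩ := hX
  refine ⟨i, h1, h2, ?_⟩
  have : yCount E X v i = yCount E Y v i := by
    unfold yCount
    congr 1
    refine filter_congr fun e he => and_congr_right fun hv => ?_
    have : (e.erase v).image X = (e.erase v).image Y := by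
      refine image_congr fun u hu => h u ?_
      exact mem_biUnion.mpr ⟨e, mem_filter.mpr ⟨he, hv⟩, mem_of_mem_erase hu⟩
    rw [this]
  rwa [← this]

/-- **Inequality (LLL), Haeupler–Saha–Srinivasan.** Under `q ≥ 500 k³ Δ^{1/(k-1)}` the set `𝒬`
of proper colorings is nonempty and, for each vertex `v`,
`Pr_𝒬(X ε-bad at v) ≤ Pr_Ω(X ε-bad at v) · ∏_{f ∈ N_v} (1 - 2/q^{k-1})^{-1}`,
where `N_v` is the set of edges meeting some edge containing `v`. -/
theorem lll_transfer_bad_at_vertex {V : Type} [Fintype V] [DecidableEq V]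
    (k Δ q : ℕ) (hk : 3 ≤ k) (hΔ : 1 ≤ Δ) (E : Finset (Finset V))
    (hunif : ∀ e ∈ E, e.card = k)
    (hsimple : ∀ e ∈ E, ∀ f ∈ E, e ≠ f → (e ∩ f).card ≤ 1)
    (hdeg : ∀ u : V, (E.filter (fun e => u ∈ e)).card ≤ Δ)
    (hq : 500 * (k : ℝ) ^ 3 * (Δ : ℝ) ^ ((1 : ℝ) / ((k : ℝ) - 1)) ≤ (q : ℝ))
    (v : V) :
    (properColorings E q).Nonempty ∧
    (((properColorings E q).filter
          (fun X => epsBadAt E k (1 / (50 * (k : ℝ) ^ 2)) X v)).card : ℝ) /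
        ((properColorings E q).card : ℝ) ≤
      (((Finset.univ.filter
            (fun X : V → Fin q => epsBadAt E k (1 / (50 * (k : ℝ) ^ 2)) X v)).card : ℝ) /
          (q : ℝ) ^ (Fintype.card V)) *
        ((1 - 2 / (q : ℝ) ^ (k - 1)) ^
            ((E.filter (fun f => ∃ e ∈ E, v ∈ e ∧ (e ∩ f).Nonempty)).card))⁻¹ := by
  have hq4 := four_mul_le_pow hk hq
  have hlll := card_mono_le (by omega) hΔ E hunif hdeg hq4
  have hkΔ : (3 : ℝ) ≤ (k : ℝ) * Δ := by
    exact_mod_cast (Nat.mul_le_mul hk hΔ)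
  have hR : 0 < (q : ℝ) ^ (k - 1) := by linarith
  have hx0 : 0 ≤ 2 / (q : ℝ) ^ (k - 1) := by positivity
  have hx1 : 2 / (q : ℝ) ^ (k - 1) < 1 := by rw [div_lt_one hR]; linarith
  have hn : 0 < (q : ℝ) ^ Fintype.card V := by
    refine pow_pos ((Nat.cast_nonneg q).lt_of_ne fun h0 => ?_) _
    rw [← h0, zero_pow (by omega)] at hR
    exact lt_irrefl _ hR
  set x := 2 / (q : ℝ) ^ (k - 1) with hxdef
  have hchain : ∀ T ⊆ E, ∀ D ⊆ E, (1 - x) ^ D.card * ((properColorings T q).card : ℝ) ≤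
      (properColorings (T ∪ D) q).card := fun T hT D hD =>
    card_proper_union_ge hx0 hx1.le T D fun d hd U hU _ =>
      hlll U (hU.trans (union_subset hT hD)) d (hD hd)
  have hpos : (0 : ℝ) < (properColorings E q).card := by
    have h := hchain ∅ (empty_subset _) E subset_rfl
    have h0 : (properColorings (∅ : Finset (Finset V)) q).card = q ^ Fintype.card V := by
      simp [properColorings]
    rw [empty_union, h0, Nat.cast_pow] at h
    exact (mul_pos (pow_pos (by linarith) _) hn).trans_le h
  refine ⟨card_pos.mp (by exact_mod_cast hpos), ?_⟩
  set N := E.filter (fun f => ∃ e ∈ E, v ∈ e ∧ (e ∩ f).Nonempty) with hN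
  set B : (V → Fin q) → Prop := fun X => epsBadAt E k (1 / (50 * (k : ℝ) ^ 2)) X v with hB
  have hind := card_filter_proper_mul (q := q) ((E.filter (fun e => v ∈ e)).biUnion id) B
    (fun _ _ h => epsBadAt_congr h) (E \ N) (by
      intro f hf
      rw [mem_sdiff, hN, mem_filter, not_and] at hf
      rw [Finset.disjoint_biUnion_left]
      intro e he
      rw [mem_filter] at he
      rw [id, Finset.disjoint_iff_inter_eq_empty, ← Finset.not_nonempty_iff_eq_empty]
      exact fun hne => hf.2 hf.1 ⟨e, he.1, he.2, hne⟩)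
  have hind' : (((properColorings (E \ N) q).filter B).card : ℝ) * (q : ℝ) ^ Fintype.card V =
      ((univ.filter B).card : ℝ) * (properColorings (E \ N) q).card := by exact_mod_cast hind
  have hsub : (((properColorings E q).filter B).card : ℝ) ≤
      ((properColorings (E \ N) q).filter B).card := by
    exact_mod_cast card_le_card (filter_subset_filter _ (properColorings_anti sdiff_subset))
  have hlow := hchain (E \ N) sdiff_subset N (filter_subset _ _)
  rw [sdiff_union_of_subset (filter_subset _ _)] at hlow
  have hy : 0 < (1 - x) ^ N.card := pow_pos (by linarith) _
  have hBnn : (0 : ℝ) ≤ (univ.filter B).card := Nat.cast_nonneg _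
  rw [← div_eq_mul_inv, div_div, div_le_div_iff₀ hpos (mul_pos hn hy)]
  calc _ ≤ (((properColorings (E \ N) q).filter B).card : ℝ) *
        ((q : ℝ) ^ Fintype.card V * (1 - x) ^ N.card) :=
        mul_le_mul_of_nonneg_right hsub (mul_pos hn hy).le
    _ = ((univ.filter B).card : ℝ) *
        ((1 - x) ^ N.card * (properColorings (E \ N) q).card) := by
        rw [← mul_assoc, hind']; ring
    _ ≤ _ := mul_le_mul_of_nonneg_left hlow hBnn
end
end

section
/- Let k ≥ 3, let H be a simple k-uniform hypergraph on a vertex set V of size n with maximum degree Δ, let ε = 1/(50k²), and suppose q ≥ 500·k³·Δ^{1/(k−1)}. Then the number of colorings X ∈ [q]^V that are ε-bad is at most n·e^{−εq}·q^n; equivalently, a uniformly random coloring from Ω = [q]^V is ε-good with probability at least 1 − n·e^{−εq}. -/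
/-! Fix a vertex `v` and `1 ≤ i ≤ k - 2`. By simplicity the sets `e \ {v}`, for edges `e ∋ v`, are
pairwise disjoint, so under a uniform coloring the events "`e \ {v}` receives exactly `i` colors"
are independent. Choosing the `i` colors first, each has probability at most
`p = q ^ i * (i / q) ^ (k - 1)` (`card_image_eq_le`). Independence bounds the exponential moment:
`𝔼 exp (3 y) ≤ (1 + e³ p) ^ Δ ≤ exp (e³ p Δ)` (`sum_prod_le`), and the hypothesis on `q` gives
`e³ p Δ ≤ (εq) ^ i` (`numeric_bound`). Markov's inequality then yields
`ℙ (y ≥ (εq) ^ i) ≤ exp (-2 (εq) ^ i) ≤ exp (-2 εq)` (`tail_bound`). A union bound over the fewer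
than `k ≤ exp (εq)` values of `i` and over the `n` vertices finishes the proof.

Independence is used only as a statement about finite sums (`sum_mul_sum_eq`), proved by exchanging
the coordinates of two independent colorings outside a set `S`. -/

open Finset

noncomputable section
open Classical

variable {V : Type} [Fintype V] [DecidableEq V]

/-- Independence of functions of disjoint sets of coordinates: `f` depends on the coordinates in
`S` only, `g` on those outside `S` only. -/
theorem sum_mul_sum_eq {V : Type} [Fintype V] [DecidableEq V] {q : ℕ} (S : Finset V)
    (f g : (V → Fin q) → ℝ)
    (hf : ∀ X Y, (∀ u ∈ S, X u = Y u) → f X = f Y)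
    (hg : ∀ X Y, (∀ u, u ∉ S → X u = Y u) → g X = g Y) :
    (∑ X, f X) * (∑ X, g X) = (q : ℝ) ^ Fintype.card V * ∑ X, f X * g X := by
  let σ : (V → Fin q) × (V → Fin q) → (V → Fin q) × (V → Fin q) :=
    fun p => (S.piecewise p.1 p.2, S.piecewise p.2 p.1)
  have hσ : Function.Involutive σ := by
    rintro ⟨X, Y⟩
    ext u <;> by_cases hu : u ∈ S <;> simp [σ, hu]
  have h1 : ∑ p : (V → Fin q) × (V → Fin q), f p.1 * g p.2
      = ∑ p : (V → Fin q) × (V → Fin q), f p.1 * g p.1 := by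
    refine Fintype.sum_equiv hσ.toPerm _ _ ?_
    rintro ⟨X, Y⟩
    simp only [Function.Involutive.coe_toPerm, σ]
    congr 1
    · exact hf _ _ (fun u hu => by simp [hu])
    · exact hg _ _ (fun u hu => by simp [hu])
  rw [Finset.sum_mul_sum, ← Fintype.sum_prod_type' (fun X Y => f X * g Y), h1,
    Fintype.sum_prod_type (fun p : (V → Fin q) × (V → Fin q) => f p.1 * g p.1)]
  simp [Finset.mul_sum]

/-- An upper bound for the expectation of a product of weights that depend on pairwise disjoint
sets of coordinates. -/
theorem sum_prod_le {V : Type} [Fintype V] [DecidableEq V] {q : ℕ} (hq : 0 < q)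
    {ι : Type} (F : Finset ι) (T : ι → Finset V)
    (w : ι → (V → Fin q) → ℝ) (B : ℝ)
    (hT : ∀ e ∈ F, ∀ f ∈ F, e ≠ f → Disjoint (T e) (T f))
    (hw0 : ∀ e X, 0 ≤ w e X)
    (hw : ∀ e X Y, (∀ u ∈ T e, X u = Y u) → w e X = w e Y)
    (hB : ∀ e ∈ F, ∑ X, w e X ≤ (q : ℝ) ^ Fintype.card V * B) :
    ∑ X, ∏ e ∈ F, w e X ≤ (q : ℝ) ^ Fintype.card V * B ^ F.card := by
  induction F using Finset.induction_on with
  | empty => simp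
  | insert a F ha ih =>
    have ih' := ih (fun e he f hf => hT e (mem_insert_of_mem he) f (mem_insert_of_mem hf))
      (fun e he => hB e (mem_insert_of_mem he))
    have hind := sum_mul_sum_eq (T a) (w a) (fun X => ∏ e ∈ F, w e X) (hw a) (by
      intro X Y hXY
      refine prod_congr rfl (fun e he => hw e X Y (fun u hu => hXY u (fun hu' => ?_)))
      exact Finset.disjoint_left.mp (hT e (mem_insert_of_mem he) a (mem_insert_self _ _)
        (fun h => ha (h ▸ he))) hu hu')
    have hq' : (0 : ℝ) < (q : ℝ) ^ Fintype.card V := by positivity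
    have hBa := hB a (mem_insert_self _ _)
    have h0 : 0 ≤ ∑ X, ∏ e ∈ F, w e X := sum_nonneg fun X _ => prod_nonneg fun e _ => hw0 e X
    have h1 : 0 ≤ ∑ X, w a X := sum_nonneg fun X _ => hw0 a X
    have := mul_le_mul hBa ih' h0 (h1.trans hBa)
    rw [hind] at this
    simp only [prod_insert ha, card_insert_of_notMem ha]
    refine le_of_mul_le_mul_left (this.trans (le_of_eq ?_)) hq'
    ring

/-- At most `q ^ i` sets of `i` colors are available, and a uniform coloring maps `T` into a given
one with probability `(i / q) ^ |T|`. -/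
theorem card_image_eq_le {V : Type} [Fintype V] [DecidableEq V] {q : ℕ} (hq : 0 < q)
    (T : Finset V) (i : ℕ) :
    ((univ.filter (fun X : V → Fin q => (T.image X).card = i)).card : ℝ)
      ≤ (q : ℝ) ^ Fintype.card V * ((q : ℝ) ^ i * ((i : ℝ) / q) ^ T.card) := by
  have hsub : univ.filter (fun X : V → Fin q => (T.image X).card = i) ⊆
      (powersetCard i (univ : Finset (Fin q))).biUnion
        (fun C => Fintype.piFinset (fun u => if u ∈ T then C else univ)) := by
    intro X hX
    simp only [mem_filter, mem_univ, true_and] at hX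
    simp only [mem_biUnion, mem_powersetCard, Fintype.mem_piFinset]
    refine ⟨T.image X, ⟨subset_univ _, hX⟩, fun u => ?_⟩
    split_ifs with hu
    · exact mem_image_of_mem _ hu
    · exact mem_univ _
  have hcard : ∀ C ∈ powersetCard i (univ : Finset (Fin q)),
      (Fintype.piFinset (fun u => if u ∈ T then C else univ)).card
        ≤ i ^ T.card * q ^ (Fintype.card V - T.card) := by
    intro C hC
    rw [mem_powersetCard] at hC
    rw [Fintype.card_piFinset]
    simp only [apply_ite Finset.card, hC.2, card_univ, Fintype.card_fin]
    rw [prod_ite, prod_const, prod_const, filter_not, card_sdiff_of_subset (filter_subset _ _)]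
    simp
  have h1 := (card_le_card hsub).trans (card_biUnion_le_card_mul _ _ _ hcard)
  rw [card_powersetCard, card_univ, Fintype.card_fin] at h1
  have h2 := h1.trans (Nat.mul_le_mul_right _ (Nat.choose_le_pow q i))
  have h3 : ((univ.filter (fun X : V → Fin q => (T.image X).card = i)).card : ℝ)
      ≤ (q : ℝ) ^ i * ((i : ℝ) ^ T.card * (q : ℝ) ^ (Fintype.card V - T.card)) := by
    exact_mod_cast h2
  refine h3.trans (le_of_eq ?_)
  have hq' : (q : ℝ) ≠ 0 := by positivity
  rw [pow_sub₀ _ hq' (card_le_univ T), div_pow]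
  field_simp

theorem exp_three_le : Real.exp 3 ≤ 27 := by
  have h : Real.exp 3 = Real.exp 1 ^ 3 := by rw [← Real.exp_nat_mul]; norm_num
  rw [h]
  calc Real.exp 1 ^ 3 ≤ 3 ^ 3 := by
        gcongr
        linarith [Real.exp_one_lt_d9]
    _ = 27 := by norm_num

/-- The lower bound on `q` makes the exponent `e³ p Δ` of the moment bound at most `(εq) ^ i`. -/
theorem numeric_bound (k Δ q i : ℕ) (hk : 3 ≤ k) (hq0 : 0 < q) (hi : i ≤ k - 2)
    (hq : 500 * (k : ℝ) ^ 3 * (Δ : ℝ) ^ ((1 : ℝ) / ((k : ℝ) - 1)) ≤ (q : ℝ)) :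
    Real.exp 3 * ((q : ℝ) ^ i * ((i : ℝ) / q) ^ (k - 1)) * Δ
      ≤ ((1 / (50 * (k : ℝ) ^ 2)) * (q : ℝ)) ^ i := by
  have hkR : (3 : ℝ) ≤ k := by exact_mod_cast hk
  have hqR : (0 : ℝ) < q := by exact_mod_cast hq0
  have hik : (i : ℝ) ≤ k := by exact_mod_cast (by omega : i ≤ k)
  have hΔ : (Δ : ℝ) ≤ ((q : ℝ) / (500 * (k : ℝ) ^ 3)) ^ (k - 1) := by
    have h1 : (Δ : ℝ) ^ ((1 : ℝ) / ((k : ℝ) - 1)) ≤ (q : ℝ) / (500 * (k : ℝ) ^ 3) := by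
      rw [le_div_iff₀ (by positivity)]
      linarith
    have h2 : ((Δ : ℝ) ^ ((1 : ℝ) / ((k : ℝ) - 1))) ^ (k - 1) = Δ := by
      have : (1 : ℝ) / ((k : ℝ) - 1) = ((k - 1 : ℕ) : ℝ)⁻¹ := by
        rw [Nat.cast_sub (by omega)]
        simp
      rw [this]
      exact Real.rpow_inv_natCast_pow (by positivity) (by omega)
    calc (Δ : ℝ) = _ := h2.symm
      _ ≤ _ := by gcongr
  set s : ℝ := (i : ℝ) / (500 * (k : ℝ) ^ 3) with hs
  have hs0 : 0 ≤ s := by positivity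
  have hs1 : 27 * s ≤ 1 := by
    rw [hs, ← mul_div_assoc, div_le_one (by positivity)]
    nlinarith [mul_nonneg (by linarith : (0:ℝ) ≤ k) (sq_nonneg (k:ℝ)), sq_nonneg ((k:ℝ) - 1),
      mul_nonneg (by linarith : (0:ℝ) ≤ (k:ℝ)) (by nlinarith : (0:ℝ) ≤ (k:ℝ)^2 - 1)]
  have hs2 : 50 * (k : ℝ) ^ 2 * s ≤ 1 := by
    rw [hs, ← mul_div_assoc, div_le_one (by positivity)]
    nlinarith [mul_le_mul_of_nonneg_left hik (sq_nonneg (k:ℝ)),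
      mul_nonneg (by linarith : (0:ℝ) ≤ k) (sq_nonneg (k:ℝ))]
  -- Since `i + 1 ≤ k - 1`, one factor `s` is left over to absorb the constant `e³`.
  have hspow : s ^ (k - 1) ≤ s ^ (i + 1) :=
    pow_le_pow_of_le_one hs0 (by linarith) (by omega)
  have hcombine : ((i : ℝ) / q) ^ (k - 1) * ((q : ℝ) / (500 * (k : ℝ) ^ 3)) ^ (k - 1)
      = s ^ (k - 1) := by
    rw [← mul_pow, hs]
    congr 1
    field_simp
  have hsi : s ^ i ≤ (1 / (50 * (k : ℝ) ^ 2)) ^ i := by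
    gcongr
    rw [le_div_iff₀ (by positivity)]
    linarith
  calc Real.exp 3 * ((q : ℝ) ^ i * ((i : ℝ) / q) ^ (k - 1)) * Δ
      ≤ 27 * ((q : ℝ) ^ i * ((i : ℝ) / q) ^ (k - 1)) *
          ((q : ℝ) / (500 * (k : ℝ) ^ 3)) ^ (k - 1) := by
        gcongr
        exact exp_three_le
    _ = (q : ℝ) ^ i * (27 * s ^ (k - 1)) := by rw [← hcombine]; ring
    _ ≤ (q : ℝ) ^ i * (27 * s ^ (i + 1)) := by gcongr
    _ = (q : ℝ) ^ i * (s ^ i * (27 * s)) := by ring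
    _ ≤ (q : ℝ) ^ i * ((1 / (50 * (k : ℝ) ^ 2)) ^ i * 1) := by gcongr
    _ = _ := by rw [mul_one, mul_pow, mul_comm]

theorem yCount_eq {V : Type} [DecidableEq V] (E : Finset (Finset V)) {q : ℕ} (X : V → Fin q)
    (v : V) (i : ℕ) :
    yCount E X v i =
      ((E.filter (fun e => v ∈ e)).filter (fun e => ((e.erase v).image X).card = i)).card := by
  rw [filter_filter, yCount]

/-- Chernoff bound for the number of edges at `v` that see exactly `i` colors. -/
theorem tail_bound {V : Type} [Fintype V] [DecidableEq V]
    (k Δ q i : ℕ) (hk : 3 ≤ k) (hq0 : 0 < q) (hi : i ≤ k - 2) (E : Finset (Finset V))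
    (hunif : ∀ e ∈ E, e.card = k)
    (hsimple : ∀ e ∈ E, ∀ f ∈ E, e ≠ f → (e ∩ f).card ≤ 1)
    (hdeg : ∀ u : V, (E.filter (fun e => u ∈ e)).card ≤ Δ)
    (hq : 500 * (k : ℝ) ^ 3 * (Δ : ℝ) ^ ((1 : ℝ) / ((k : ℝ) - 1)) ≤ (q : ℝ)) (v : V) :
    ((univ.filter (fun X : V → Fin q =>
        ((1 / (50 * (k : ℝ) ^ 2)) * (q : ℝ)) ^ i ≤ (yCount E X v i : ℝ))).card : ℝ)
      ≤ (q : ℝ) ^ Fintype.card V *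
        Real.exp (-2 * ((1 / (50 * (k : ℝ) ^ 2)) * (q : ℝ)) ^ i) := by
  set a : ℝ := ((1 / (50 * (k : ℝ) ^ 2)) * (q : ℝ)) ^ i with ha
  set F := E.filter (fun e => v ∈ e) with hF
  set p : ℝ := (q : ℝ) ^ i * ((i : ℝ) / q) ^ (k - 1) with hp
  let w : Finset V → (V → Fin q) → ℝ :=
    fun e X => if ((e.erase v).image X).card = i then Real.exp 3 else 1
  have hp0 : 0 ≤ p := by positivity
  have hmoment : ∑ X, ∏ e ∈ F, w e X
      ≤ (q : ℝ) ^ Fintype.card V * (Real.exp (Real.exp 3 * p)) ^ F.card := by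
    refine sum_prod_le hq0 F (fun e => e.erase v) w _ ?_ ?_ ?_ ?_
    · intro e he f hf hef
      rw [hF, mem_filter] at he hf
      rw [Finset.disjoint_left]
      intro u hue huf
      rw [mem_erase] at hue huf
      exact hue.1 (Finset.card_le_one.mp (hsimple e he.1 f hf.1 hef) u
        (mem_inter.mpr ⟨hue.2, huf.2⟩) v (mem_inter.mpr ⟨he.2, hf.2⟩))
    · intro e X
      simp only [w]
      split_ifs <;> positivity
    · intro e X Y hXY
      simp only [w, Finset.image_congr (fun u hu => hXY u hu)]
    · intro e he
      rw [hF, mem_filter] at he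
      have hc : (e.erase v).card = k - 1 := by rw [card_erase_of_mem he.2, hunif e he.1]
      have hN := card_image_eq_le hq0 (e.erase v) i
      rw [hc, ← hp] at hN
      calc ∑ X, w e X
          ≤ ∑ X : V → Fin q,
            (1 + Real.exp 3 * (if ((e.erase v).image X).card = i then 1 else 0)) := by
            refine sum_le_sum (fun X _ => ?_)
            simp only [w]
            split_ifs <;> linarith [Real.exp_pos 3]
        _ = (q : ℝ) ^ Fintype.card V + Real.exp 3 *
            ((univ.filter (fun X : V → Fin q => ((e.erase v).image X).card = i)).card : ℝ) := by
            rw [sum_add_distrib, ← mul_sum, sum_boole]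
            simp
        _ ≤ (q : ℝ) ^ Fintype.card V + Real.exp 3 * ((q : ℝ) ^ Fintype.card V * p) := by
            gcongr
        _ = (q : ℝ) ^ Fintype.card V * (Real.exp 3 * p + 1) := by ring
        _ ≤ _ := by
            gcongr
            exact Real.add_one_le_exp _
  have hprod : ∀ X, ∏ e ∈ F, w e X = Real.exp (3 * (yCount E X v i : ℝ)) := by
    intro X
    rw [yCount_eq, ← hF, mul_comm, Real.exp_nat_mul]
    simp only [w]
    rw [prod_ite, prod_const, prod_const_one, mul_one]
  have hexp : (Real.exp (Real.exp 3 * p)) ^ F.card ≤ Real.exp a := by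
    rw [← Real.exp_nat_mul]
    apply Real.exp_le_exp.mpr
    have hFΔ : (F.card : ℝ) ≤ Δ := by exact_mod_cast hdeg v
    calc (F.card : ℝ) * (Real.exp 3 * p) ≤ Δ * (Real.exp 3 * p) := by gcongr
      _ = Real.exp 3 * p * Δ := by ring
      _ ≤ a := numeric_bound k Δ q i hk hq0 hi hq
  have hmarkov : ((univ.filter (fun X : V → Fin q => a ≤ (yCount E X v i : ℝ))).card : ℝ)
      * Real.exp (3 * a) ≤ ∑ X, ∏ e ∈ F, w e X := by
    rw [← nsmul_eq_mul, ← sum_const]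
    refine (sum_le_sum (fun X hX => ?_)).trans
      (sum_le_sum_of_subset_of_nonneg (filter_subset _ univ) (fun X _ _ => ?_))
    · rw [hprod]
      simp only [mem_filter] at hX
      exact Real.exp_le_exp.mpr (by linarith [hX.2])
    · rw [hprod]
      positivity
  refine le_of_mul_le_mul_right ?_ (Real.exp_pos (3 * a))
  refine (hmarkov.trans hmoment).trans ?_
  rw [mul_assoc, ← Real.exp_add]
  have h3 : -2 * a + 3 * a = a := by ring
  rw [h3]
  gcongr

/-- Almost all colorings of `Ω = [q]^V` are `ε`-good: the number of colorings that are
`ε`-bad (with `ε = 1/(50k²)`) is at most `n e^{-εq} q^n`. -/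
theorem bad_colorings_count {V : Type} [Fintype V] [DecidableEq V]
    (k Δ q : ℕ) (hk : 3 ≤ k) (E : Finset (Finset V))
    (hunif : ∀ e ∈ E, e.card = k)
    (hsimple : ∀ e ∈ E, ∀ f ∈ E, e ≠ f → (e ∩ f).card ≤ 1)
    (hdeg : ∀ u : V, (E.filter (fun e => u ∈ e)).card ≤ Δ)
    (hq : 500 * (k : ℝ) ^ 3 * (Δ : ℝ) ^ ((1 : ℝ) / ((k : ℝ) - 1)) ≤ (q : ℝ)) :
    ((Finset.univ.filter
        (fun X : V → Fin q => ∃ v : V, epsBadAt E k (1 / (50 * (k : ℝ) ^ 2)) X v)).card : ℝ) ≤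
      (Fintype.card V : ℝ) * Real.exp (-((1 / (50 * (k : ℝ) ^ 2)) * (q : ℝ))) *
        (q : ℝ) ^ (Fintype.card V) := by
  classical
  rcases isEmpty_or_nonempty V with hV | hV
  · simp
  rcases Nat.eq_zero_or_pos q with rfl | hq0
  · have : IsEmpty (V → Fin 0) := ⟨fun X => (X hV.some).elim0⟩
    rw [Finset.eq_empty_of_isEmpty (Finset.univ.filter _), card_empty, Nat.cast_zero]
    positivity
  have hqR : (0 : ℝ) < q := by exact_mod_cast hq0
  have hkR : (3 : ℝ) ≤ k := by exact_mod_cast hk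
  set b : ℝ := (1 / (50 * (k : ℝ) ^ 2)) * (q : ℝ) with hb
  have hb0 : 0 < b := by positivity
  rcases Nat.eq_zero_or_pos Δ with rfl | hΔ
  -- Without edges every `y` is `0 < (εq) ^ i`.
  · have hbad : ∀ (X : V → Fin q) (v : V), ¬ epsBadAt E k (1 / (50 * (k : ℝ) ^ 2)) X v := by
      rintro X v ⟨i, -, -, h⟩
      have h0 : yCount E X v i = 0 := by
        rw [yCount_eq, Finset.card_eq_zero.mp (Nat.le_zero.mp (hdeg v) :), filter_empty,
          card_empty]
      rw [h0, Nat.cast_zero] at h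
      exact absurd h (not_le.mpr (pow_pos hb0 i))
    rw [Finset.filter_false_of_mem (fun X _ => by simpa using hbad X), card_empty, Nat.cast_zero]
    positivity
  have hbk : (k : ℝ) ≤ b := by
    have h1 : (1 : ℝ) ≤ (Δ : ℝ) ^ ((1 : ℝ) / ((k : ℝ) - 1)) :=
      Real.one_le_rpow (by exact_mod_cast hΔ) (div_nonneg zero_le_one (by linarith))
    have h2 : 500 * (k : ℝ) ^ 3 ≤ q := (le_mul_of_one_le_right (by positivity) h1).trans hq
    rw [hb, one_div, inv_mul_eq_div, le_div_iff₀ (by positivity)]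
    nlinarith [pow_pos (by linarith : (0:ℝ) < k) 3]
  have hk_exp : (k : ℝ) ≤ Real.exp b := by linarith [Real.add_one_le_exp b]
  have hsub : (Finset.univ.filter
        (fun X : V → Fin q => ∃ v : V, epsBadAt E k (1 / (50 * (k : ℝ) ^ 2)) X v)) ⊆
      (univ : Finset V).biUnion (fun v => (Icc 1 (k - 2)).biUnion (fun i =>
        univ.filter (fun X : V → Fin q => b ^ i ≤ (yCount E X v i : ℝ)))) := by
    intro X hX
    simp only [mem_filter, mem_univ, true_and] at hX
    obtain ⟨v, i, hi1, hi2, h⟩ := hX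
    simp only [mem_biUnion, mem_univ, true_and, mem_filter, mem_Icc]
    exact ⟨v, i, ⟨hi1, hi2⟩, h⟩
  have hv : ∀ v : V, (((Icc 1 (k - 2)).biUnion (fun i =>
        univ.filter (fun X : V → Fin q => b ^ i ≤ (yCount E X v i : ℝ)))).card : ℝ)
      ≤ Real.exp (-b) * (q : ℝ) ^ Fintype.card V := by
    intro v
    calc _ ≤ ∑ i ∈ Icc 1 (k - 2),
          ((univ.filter (fun X : V → Fin q => b ^ i ≤ (yCount E X v i : ℝ))).card : ℝ) := by
          exact_mod_cast card_biUnion_le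
      _ ≤ ∑ i ∈ Icc 1 (k - 2), (q : ℝ) ^ Fintype.card V * Real.exp (-2 * b) := by
          refine sum_le_sum (fun i hi => ?_)
          rw [mem_Icc] at hi
          refine (tail_bound k Δ q i hk hq0 hi.2 E hunif hsimple hdeg hq v).trans ?_
          have : b ≤ b ^ i := le_self_pow₀ (by linarith) (by omega)
          rw [← hb]
          gcongr ?_ * Real.exp ?_
          linarith
      _ = ((k - 2 : ℕ) : ℝ) * ((q : ℝ) ^ Fintype.card V * Real.exp (-2 * b)) := by simp
      _ ≤ Real.exp b * ((q : ℝ) ^ Fintype.card V * Real.exp (-2 * b)) := by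
          gcongr
          exact le_trans (by exact_mod_cast Nat.sub_le k 2) hk_exp
      _ = (Real.exp b * Real.exp (-2 * b)) * (q : ℝ) ^ Fintype.card V := by ring
      _ = _ := by
          rw [← Real.exp_add]
          congr 2
          ring
  calc _ ≤ ∑ v : V, (((Icc 1 (k - 2)).biUnion (fun i =>
        univ.filter (fun X : V → Fin q => b ^ i ≤ (yCount E X v i : ℝ)))).card : ℝ) := by
        exact_mod_cast (card_le_card hsub).trans card_biUnion_le
    _ ≤ ∑ v : V, Real.exp (-b) * (q : ℝ) ^ Fintype.card V := sum_le_sum (fun v _ => hv v)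
    _ = _ := by
        simp [mul_assoc]
end
end
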